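/- arXiv:2204.01088 — 3 statements merged into one kernel-verified Lean document; each statement's English description precedes it below -/
import Mathlib

section
/- For the standard Gaussian measure γ on ℝ^d and all Schwartz (or smooth compactly supported) functions f, g : ℝ^d → ℝ, the covariance of f and g under γ satisfies |Cov_γ(f,g)| ≤ ‖∇f‖_{L^p(γ)} · ‖∇g‖_{L^q(γ)} for every p ∈ [1,∞) with q = p/(p-1) (q = ∞ when p = 1). -/
open MeasureTheory Real Set
open scoped ENNReal

/-- The standard Gaussian probability measure on `ℝ^d`. -/
noncomputable def stdGaussian (d : ℕ) : Measure (EuclideanSpace ℝ (Fin d)) :=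
  (volume : Measure (EuclideanSpace ℝ (Fin d))).withDensity
    (fun x => ENNReal.ofReal ((2 * π) ^ (-(d : ℝ) / 2) * Real.exp (-‖x‖ ^ 2 / 2)))

namespace GaussCov

noncomputable def dens (d : ℕ) (x : EuclideanSpace ℝ (Fin d)) : ℝ :=
  (2 * π) ^ (-(d : ℝ) / 2) * Real.exp (-‖x‖ ^ 2 / 2)

lemma dens_nonneg (d : ℕ) (x : EuclideanSpace ℝ (Fin d)) : 0 ≤ dens d x := by
  unfold dens; positivity

lemma dens_cont (d : ℕ) : Continuous (dens d) := by
  unfold dens; fun_prop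

lemma std_def (d : ℕ) : stdGaussian d = volume.withDensity (fun x => ENNReal.ofReal (dens d x)) := rfl

lemma dens_integrable (d : ℕ) : Integrable (dens d) := by
  have h := GaussianFourier.integrable_cexp_neg_mul_sq_norm_add (V := EuclideanSpace ℝ (Fin d))
    (b := 1/2) (by norm_num) 0 0
  have h2 := h.re.const_mul ((2 * π) ^ (-(d : ℝ) / 2))
  refine h2.congr (Filter.Eventually.of_forall fun x => ?_)
  simp only [dens]
  congr 1
  have : (-(1/2 : ℂ) * (‖x‖ : ℂ) ^ 2 + 0 * ((inner ℝ 0 x : ℝ) : ℂ)) = ((-‖x‖ ^ 2 / 2 : ℝ) : ℂ) := by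
    push_cast; ring
  rw [this, ← Complex.ofReal_exp]
  exact Complex.ofReal_re _

instance (d : ℕ) : IsFiniteMeasure (stdGaussian d) :=
  isFiniteMeasure_withDensity_ofReal (dens_integrable d).2

lemma integral_std {F : Type*} [NormedAddCommGroup F] [NormedSpace ℝ F] (d : ℕ)
    (h : EuclideanSpace ℝ (Fin d) → F) :
    ∫ x, h x ∂(stdGaussian d) = ∫ x, dens d x • h x := by
  rw [std_def, integral_withDensity_eq_integral_toReal_smul]
  · simp [ENNReal.toReal_ofReal (dens_nonneg d _)]
  · exact (dens_cont d).measurable.ennreal_ofReal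
  · simp

lemma integrable_std (d : ℕ)
    {h : EuclideanSpace ℝ (Fin d) → ℝ} (hh : Integrable h (stdGaussian d)) :
    Integrable (fun x => dens d x * h x) := by
  rw [std_def, integrable_withDensity_iff_integrable_smul'] at hh
  · simpa [ENNReal.toReal_ofReal (dens_nonneg d _)] using hh
  · exact (dens_cont d).measurable.ennreal_ofReal
  · simp

lemma std_eq (d : ℕ) :
    stdGaussian d = ProbabilityTheory.stdGaussian (EuclideanSpace ℝ (Fin d)) := by
  apply Measure.ext_of_charFun
  ext t
  rw [ProbabilityTheory.charFun_stdGaussian, charFun_apply, integral_std]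
  have h := GaussianFourier.integral_cexp_neg_mul_sq_norm_add (V := EuclideanSpace ℝ (Fin d))
    (b := 1/2) (by norm_num) Complex.I t
  have e : ∀ x, dens d x • Complex.exp ((inner ℝ x t : ℝ) * Complex.I) =
      (((2 * π) ^ (-(d : ℝ) / 2) : ℝ) : ℂ) *
      Complex.exp (-(1/2) * (‖x‖ : ℂ) ^ 2 + Complex.I * ((inner ℝ t x : ℝ) : ℂ)) := by
    intro x
    rw [Complex.exp_add, real_inner_comm, mul_comm Complex.I, ← mul_assoc, Complex.real_smul, dens]
    push_cast
    congr 3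
    ring
  simp_rw [e]
  rw [integral_const_mul, h, ← mul_assoc]
  have e2 : (((2 * π) ^ (-(d : ℝ) / 2) : ℝ) : ℂ) *
    ((π : ℂ) / (1/2)) ^ ((Module.finrank ℝ (EuclideanSpace ℝ (Fin d)) : ℂ) / 2) = 1 := by
    have : ((π : ℂ) / (1/2)) = ((2 * π : ℝ) : ℂ) := by push_cast; ring
    rw [this, finrank_euclideanSpace, Fintype.card_fin]
    have : ((d : ℂ) / 2) = (((d : ℝ)/2 : ℝ) : ℂ) := by push_cast; ring
    rw [this, ← Complex.ofReal_cpow (by positivity), ← Complex.ofReal_mul,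
      ← Real.rpow_add (by positivity)]
    simp [neg_div]
  rw [e2, one_mul]
  congr 1
  simp
  ring

instance (d : ℕ) : ProbabilityTheory.IsGaussian (stdGaussian d) := by
  rw [std_eq]; infer_instance

lemma rot (d : ℕ) (θ : ℝ) :
    ((stdGaussian d).prod (stdGaussian d)).map (ContinuousLinearMap.rotation θ) =
      (stdGaussian d).prod (stdGaussian d) := by
  apply ProbabilityTheory.IsGaussian.map_rotation_eq_self
  rw [std_eq]; simp

lemma dens_fderiv (d : ℕ) (x v : EuclideanSpace ℝ (Fin d)) :
    fderiv ℝ (dens d) x v = - (inner ℝ v x * dens d x) := by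
  have h1 : HasFDerivAt (fun x : EuclideanSpace ℝ (Fin d) => ‖x‖ ^ 2) (2 • (innerSL ℝ x)) x :=
    (hasStrictFDerivAt_norm_sq x).hasFDerivAt
  have h2 := ((((h1.neg).mul_const (1/2:ℝ)).exp).const_mul ((2 * π) ^ (-(d : ℝ) / 2))).fderiv
  have : dens d = fun x => (2 * π) ^ (-(d : ℝ) / 2) * Real.exp ((-‖x‖ ^ 2) * (1 / 2)) := by
    ext x; simp [dens, div_eq_mul_inv]
  rw [this]
  change fderiv ℝ (fun x : EuclideanSpace ℝ (Fin d) => _) x = _ at h2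
  simp only [Pi.neg_apply] at h2
  rw [h2]
  simp [real_inner_comm]
  ring

lemma dens_diff (d : ℕ) : Differentiable ℝ (dens d) := by
  unfold dens
  have : Differentiable ℝ (fun x : EuclideanSpace ℝ (Fin d) => ‖x‖ ^ 2) := 
    (contDiff_norm_sq ℝ (n := 1)).differentiable (by norm_num)
  fun_prop

lemma ibp (d : ℕ) (h : EuclideanSpace ℝ (Fin d) → ℝ) (hh : ContDiff ℝ 1 h)
    (C C' : ℝ) (hC : ∀ x, |h x| ≤ C) (hC' : ∀ x, ‖fderiv ℝ h x‖ ≤ C')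
    (v : EuclideanSpace ℝ (Fin d)) :
    ∫ x, h x * inner ℝ v x ∂(stdGaussian d) = ∫ x, fderiv ℝ h x v ∂(stdGaussian d) := by
  have i0 : Integrable h (stdGaussian d) :=
    Integrable.of_bound hh.continuous.aestronglyMeasurable C (.of_forall hC)
  have i1 : Integrable (fun x => fderiv ℝ h x v) (stdGaussian d) := by
    refine Integrable.of_bound (((hh.continuous_fderiv (by norm_num)).clm_apply
      continuous_const).aestronglyMeasurable) (C' * ‖v‖) (.of_forall fun x => ?_)
    exact (ContinuousLinearMap.le_opNorm _ _).trans (by gcongr; exact hC' x)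
  have i2 : Integrable (fun x => h x * inner ℝ v x) (stdGaussian d) := by
    have : Integrable (fun x => inner ℝ v x) (stdGaussian d) :=
      (ProbabilityTheory.IsGaussian.integrable_id (μ := stdGaussian d)).const_inner v
    exact this.bdd_mul hh.continuous.aestronglyMeasurable (.of_forall hC)
  have key := integral_mul_fderiv_eq_neg_fderiv_mul_of_integrable (μ := volume) (f := h)
    (g := dens d) (v := v) ?_ ?_ ?_ ?_ ?_
  · rw [integral_std, integral_std]
    simp only [dens_fderiv, smul_eq_mul] at key ⊢
    simp only [mul_neg, integral_neg, neg_inj] at key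
    calc _ = ∫ x, h x * (inner ℝ v x * dens d x) := by congr 1; ext x; ring
      _ = _ := key
      _ = _ := by congr 1; ext x; ring
  · simpa [mul_comm] using integrable_std d i1
  · simp only [dens_fderiv]
    refine (integrable_std d i2).neg.congr (.of_forall fun x => ?_)
    simp; ring
  · simpa [mul_comm] using integrable_std d i0
  · exact fun x _ => (hh.differentiable (by norm_num)) x
  · exact fun x _ => dens_diff d x


/-- The interpolation function. -/
noncomputable def Phi (d : ℕ) (f g : EuclideanSpace ℝ (Fin d) → ℝ) (θ : ℝ) : ℝ :=
  ∫ w, f w.1 * g (cos θ • w.1 + sin θ • w.2) ∂((stdGaussian d).prod (stdGaussian d))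

lemma int_fst (d : ℕ) : Integrable (fun w : EuclideanSpace ℝ (Fin d) × EuclideanSpace ℝ (Fin d) =>
    ‖w.1‖) ((stdGaussian d).prod (stdGaussian d)) :=
  ((ProbabilityTheory.IsGaussian.integrable_id (μ := stdGaussian d)).norm).comp_fst _

lemma int_snd (d : ℕ) : Integrable (fun w : EuclideanSpace ℝ (Fin d) × EuclideanSpace ℝ (Fin d) =>
    ‖w.2‖) ((stdGaussian d).prod (stdGaussian d)) :=
  ((ProbabilityTheory.IsGaussian.integrable_id (μ := stdGaussian d)).norm).comp_snd _

lemma rot_bound (d : ℕ) (θ : ℝ) (x y : EuclideanSpace ℝ (Fin d)) :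
    ‖-sin θ • x + cos θ • y‖ ≤ ‖x‖ + ‖y‖ := by
  refine (norm_add_le _ _).trans ?_
  rw [norm_smul, norm_smul, norm_neg]
  have h1 := abs_sin_le_one θ
  have h2 := abs_cos_le_one θ
  simp only [norm_eq_abs]
  gcongr
  · exact mul_le_of_le_one_left (norm_nonneg _) h1
  · exact mul_le_of_le_one_left (norm_nonneg _) h2

lemma Phi_deriv (d : ℕ) (f g : EuclideanSpace ℝ (Fin d) → ℝ)
    (hf : ContDiff ℝ 1 f)
    (hg : ContDiff ℝ 1 g)
    (C : ℝ) (hCf : ∀ x, |f x| ≤ C)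
    (hCg : ∀ x, |g x| ≤ C)
    (hCg' : ∀ x, ‖fderiv ℝ g x‖ ≤ C) (θ : ℝ) :
    Integrable (fun w : EuclideanSpace ℝ (Fin d) × EuclideanSpace ℝ (Fin d) =>
      f w.1 * fderiv ℝ g (cos θ • w.1 + sin θ • w.2) (-sin θ • w.1 + cos θ • w.2))
      ((stdGaussian d).prod (stdGaussian d)) ∧
    HasDerivAt (Phi d f g)
      (∫ w, f w.1 * fderiv ℝ g (cos θ • w.1 + sin θ • w.2) (-sin θ • w.1 + cos θ • w.2)
        ∂((stdGaussian d).prod (stdGaussian d))) θ := by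
  have cf := hf.continuous
  have cg := hg.continuous
  have cg' := hg.continuous_fderiv (by norm_num)
  have C0 : 0 ≤ C := (abs_nonneg _).trans (hCf 0)
  refine hasDerivAt_integral_of_dominated_loc_of_deriv_le
    (F' := fun θ (w : EuclideanSpace ℝ (Fin d) × EuclideanSpace ℝ (Fin d)) =>
      f w.1 * fderiv ℝ g (cos θ • w.1 + sin θ • w.2) (-sin θ • w.1 + cos θ • w.2))
    (bound := fun w : EuclideanSpace ℝ (Fin d) × EuclideanSpace ℝ (Fin d) =>
      C * (C * (‖w.1‖ + ‖w.2‖))) (s := univ) Filter.univ_mem ?_ ?_ ?_ ?_ ?_ ?_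
  · refine .of_forall fun t => Continuous.aestronglyMeasurable (by fun_prop)
  · refine Integrable.of_bound (Continuous.aestronglyMeasurable (by fun_prop)) (C * C)
      (.of_forall fun w => ?_)
    rw [norm_mul]
    gcongr
    · exact hCf _
    · exact hCg _
  · exact Continuous.aestronglyMeasurable (by fun_prop)
  · refine .of_forall fun w t _ => ?_
    rw [norm_mul]
    gcongr
    · exact hCf _
    · refine (ContinuousLinearMap.le_opNorm _ _).trans ?_
      gcongr
      · exact hCg' _
      · exact rot_bound d t _ _
  · exact (((int_fst d).add (int_snd d)).const_mul C).const_mul C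
  · refine .of_forall fun w t _ => ?_
    refine HasDerivAt.const_mul _ ?_
    have h1 : HasDerivAt (fun t => cos t • w.1 + sin t • w.2) (-sin t • w.1 + cos t • w.2) t :=
      ((hasDerivAt_cos t).smul_const w.1).add ((hasDerivAt_sin t).smul_const w.2)
    exact ((hg.differentiable (by norm_num)) _).hasFDerivAt.comp_hasDerivAt t h1

lemma rot_inv (d : ℕ) (θ : ℝ) (x y : EuclideanSpace ℝ (Fin d)) :
    cos θ • (cos θ • x + sin θ • y) - sin θ • (-sin θ • x + cos θ • y) = x := by
  have : cos θ • (cos θ • x + sin θ • y) - sin θ • (-sin θ • x + cos θ • y) =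
    (cos θ ^ 2 + sin θ ^ 2) • x := by module
  rw [this, cos_sq_add_sin_sq, one_smul]

lemma rot_integral (d : ℕ) (θ : ℝ) (H : EuclideanSpace ℝ (Fin d) × EuclideanSpace ℝ (Fin d) → ℝ)
    (hH : Continuous H) :
    ∫ w, H (cos θ • w.1 + sin θ • w.2, -sin θ • w.1 + cos θ • w.2)
      ∂((stdGaussian d).prod (stdGaussian d)) = ∫ w, H w ∂((stdGaussian d).prod (stdGaussian d)) := by
  conv_rhs => rw [← rot d θ]
  rw [integral_map (by fun_prop) hH.aestronglyMeasurable]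
  simp [ContinuousLinearMap.rotation_apply]

lemma rot_integrable (d : ℕ) (θ : ℝ) (H : EuclideanSpace ℝ (Fin d) × EuclideanSpace ℝ (Fin d) → ℝ)
    (hH : Continuous H)
    (h : Integrable (fun w => H (cos θ • w.1 + sin θ • w.2, -sin θ • w.1 + cos θ • w.2))
      ((stdGaussian d).prod (stdGaussian d))) :
    Integrable H ((stdGaussian d).prod (stdGaussian d)) := by
  rw [← rot d θ, integrable_map_measure hH.aestronglyMeasurable (by fun_prop)]
  refine h.congr (.of_forall fun w => ?_)
  simp [ContinuousLinearMap.rotation_apply]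

lemma fderiv_apply_eq (d : ℕ) (g : EuclideanSpace ℝ (Fin d) → ℝ)
    (x z : EuclideanSpace ℝ (Fin d)) :
    fderiv ℝ g x z = inner ℝ (gradient g x) z := by
  simp [gradient]

lemma norm_grad (d : ℕ) (g : EuclideanSpace ℝ (Fin d) → ℝ)
    (x : EuclideanSpace ℝ (Fin d)) : ‖gradient g x‖ = ‖fderiv ℝ g x‖ := by
  simp [gradient]

lemma cont_grad (d : ℕ) (g : EuclideanSpace ℝ (Fin d) → ℝ)
    (hg : ContDiff ℝ 1 g) : Continuous (gradient g) := by
  have cg' := hg.continuous_fderiv (by norm_num)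
  exact (LinearIsometryEquiv.continuous _).comp cg'

lemma Phi_deriv_eq (d : ℕ) (f g : EuclideanSpace ℝ (Fin d) → ℝ)
    (hf : ContDiff ℝ 1 f)
    (hg : ContDiff ℝ 1 g)
    (C : ℝ) (hCf : ∀ x, |f x| ≤ C)
    (hCg : ∀ x, |g x| ≤ C)
    (hCf' : ∀ x, ‖fderiv ℝ f x‖ ≤ C)
    (hCg' : ∀ x, ‖fderiv ℝ g x‖ ≤ C) (θ : ℝ) :
    ∫ w, f w.1 * fderiv ℝ g (cos θ • w.1 + sin θ • w.2) (-sin θ • w.1 + cos θ • w.2)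
        ∂((stdGaussian d).prod (stdGaussian d)) =
    - sin θ * ∫ w, inner ℝ (gradient f w.1) (gradient g (cos θ • w.1 + sin θ • w.2))
        ∂((stdGaussian d).prod (stdGaussian d)) := by
  have cf := hf.continuous
  have cg := hg.continuous
  have cf' := hf.continuous_fderiv (by norm_num)
  have cg' := hg.continuous_fderiv (by norm_num)
  have cG := cont_grad d g hg
  have cF := cont_grad d f hf
  have C0 : 0 ≤ C := (abs_nonneg _).trans (hCf 0)
  set H : EuclideanSpace ℝ (Fin d) × EuclideanSpace ℝ (Fin d) → ℝ := fun w =>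
    f (cos θ • w.1 - sin θ • w.2) * fderiv ℝ g w.1 w.2 with hH
  set K : EuclideanSpace ℝ (Fin d) × EuclideanSpace ℝ (Fin d) → ℝ := fun w =>
    inner ℝ (gradient f (cos θ • w.1 - sin θ • w.2)) (gradient g w.1) with hK
  have cH : Continuous H := by fun_prop
  have cK : Continuous K := by fun_prop
  have iH : Integrable H ((stdGaussian d).prod (stdGaussian d)) := by
    apply rot_integrable d θ H cH
    simp only [hH, rot_inv]
    exact (Phi_deriv d f g hf hg C hCf hCg hCg' θ).1
  have iK : Integrable K ((stdGaussian d).prod (stdGaussian d)) := by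
    refine Integrable.of_bound cK.aestronglyMeasurable (C * C) (.of_forall fun w => ?_)
    refine (norm_inner_le_norm _ _).trans ?_
    rw [norm_grad, norm_grad]
    gcongr
    · exact hCf' _
    · exact hCg' _
  have e1 := rot_integral d θ H cH
  have e2 := rot_integral d θ K cK
  simp only [hH, rot_inv] at e1
  simp only [hK, rot_inv] at e2
  rw [e1, e2]
  rw [integral_prod _ iH, integral_prod _ iK, ← integral_const_mul]
  congr 1
  ext u
  have hd : ∀ z, HasFDerivAt (fun z => f (cos θ • u - sin θ • z))
      (-(sin θ) • fderiv ℝ f (cos θ • u - sin θ • z)) z := by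
    intro z
    have h1 : HasFDerivAt (fun z : EuclideanSpace ℝ (Fin d) => cos θ • u - sin θ • z)
        (-(sin θ • ContinuousLinearMap.id ℝ _)) z :=
      ((hasFDerivAt_id z).const_smul (sin θ)).const_sub _
    have h2 := ((hf.differentiable (by norm_num)) (cos θ • u - sin θ • z)).hasFDerivAt.comp z h1
    have h3 : -(sin θ) • fderiv ℝ f (cos θ • u - sin θ • z) =
        (fderiv ℝ f (cos θ • u - sin θ • z)).comp (-(sin θ • ContinuousLinearMap.id ℝ _)) := by
      ext v
      simp
    rw [h3]
    exact h2
  have := ibp d (fun z => f (cos θ • u - sin θ • z)) (hf.comp (by fun_prop)) C C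
    (fun _ => hCf _) ?_ (gradient g u)
  · simp only [hH, hK, fderiv_apply_eq d g]
    rw [this, ← integral_const_mul]
    congr 1
    ext z
    rw [(hd z).fderiv]
    simp [fderiv_apply_eq d f]
  · intro z
    rw [(hd z).fderiv, norm_smul, norm_neg, norm_eq_abs]
    calc |sin θ| * ‖fderiv ℝ f (cos θ • u - sin θ • z)‖ ≤ 1 * C := by
          gcongr
          · exact abs_sin_le_one θ
          · exact hCf' _
      _ = C := one_mul C

lemma holder_bound (d : ℕ) (f g : EuclideanSpace ℝ (Fin d) → ℝ)
    (hf : ContDiff ℝ 1 f)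
    (hg : ContDiff ℝ 1 g) (p q : ℝ≥0∞) (hpq : 1 / p + 1 / q = 1) (θ : ℝ) :
    ENNReal.ofReal |∫ w, inner ℝ (gradient f w.1) (gradient g (cos θ • w.1 + sin θ • w.2))
        ∂((stdGaussian d).prod (stdGaussian d))| ≤
      eLpNorm (fun x => ‖gradient f x‖) p (stdGaussian d) *
        eLpNorm (fun x => ‖gradient g x‖) q (stdGaussian d) := by
  have cG := cont_grad d g hg
  have cF := cont_grad d f hf
  have : ENNReal.HolderTriple p q 1 := ⟨by simpa using hpq⟩
  have m1 : MeasurePreserving Prod.fst ((stdGaussian d).prod (stdGaussian d)) (stdGaussian d) :=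
    measurePreserving_fst
  have m2 : MeasurePreserving (ContinuousLinearMap.rotation θ)
    ((stdGaussian d).prod (stdGaussian d)) ((stdGaussian d).prod (stdGaussian d)) :=
    ⟨by fun_prop, rot d θ⟩
  have m3 := m1.comp m2
  have e1 : eLpNorm (fun x => ‖gradient f x‖) p (stdGaussian d) =
      eLpNorm (fun w => gradient f w.1) p ((stdGaussian d).prod (stdGaussian d)) := by
    rw [eLpNorm_norm, ← eLpNorm_comp_measurePreserving cF.aestronglyMeasurable m1]
    rfl
  have e2 : eLpNorm (fun x => ‖gradient g x‖) q (stdGaussian d) =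
      eLpNorm (fun w => gradient g (cos θ • w.1 + sin θ • w.2)) q
        ((stdGaussian d).prod (stdGaussian d)) := by
    rw [eLpNorm_norm, ← eLpNorm_comp_measurePreserving cG.aestronglyMeasurable m3]
    congr 1
  rw [e1, e2]
  have := eLpNorm_le_eLpNorm_mul_eLpNorm'_of_norm (p := p) (q := q) (r := 1)
    (μ := (stdGaussian d).prod (stdGaussian d))
    (f := fun w => gradient f w.1) (g := fun w => gradient g (cos θ • w.1 + sin θ • w.2))
    (Continuous.aestronglyMeasurable (by fun_prop)) (Continuous.aestronglyMeasurable (by fun_prop))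
    (fun a b => (inner ℝ a b : ℝ)) 1 (.of_forall fun w => by
      simpa using norm_inner_le_norm (𝕜 := ℝ) (gradient f w.1)
        (gradient g (cos θ • w.1 + sin θ • w.2)))
  rw [ENNReal.coe_one, one_mul, eLpNorm_one_eq_lintegral_enorm] at this
  refine le_trans ?_ this
  rw [← Real.enorm_eq_ofReal_abs]
  exact enorm_integral_le_lintegral_enorm _

end GaussCov

/-- Gaussian covariance estimate `|Cov_γ(f,g)| ≤ ‖∇f‖_{L^p(γ)} ‖∇g‖_{L^q(γ)}`
for conjugate exponents `p ∈ [1,∞)`, `q = p/(p-1)` (`q = ∞` when `p = 1`). -/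
theorem gaussian_covariance_estimate (d : ℕ)
    (f g : EuclideanSpace ℝ (Fin d) → ℝ)
    (hf : ContDiff ℝ (⊤ : ℕ∞) f) (hfc : HasCompactSupport f)
    (hg : ContDiff ℝ (⊤ : ℕ∞) g) (hgc : HasCompactSupport g)
    (p q : ℝ≥0∞) (hp1 : 1 ≤ p) (hp2 : p ≠ ∞) (hpq : 1 / p + 1 / q = 1) :
    ENNReal.ofReal |(∫ x, f x * g x ∂(stdGaussian d)) -
        (∫ x, f x ∂(stdGaussian d)) * (∫ x, g x ∂(stdGaussian d))| ≤
      eLpNorm (fun x => ‖gradient f x‖) p (stdGaussian d) *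
        eLpNorm (fun x => ‖gradient g x‖) q (stdGaussian d) := by
  have hf1 : ContDiff ℝ 1 f := hf.of_le (by exact_mod_cast le_top)
  have hg1 : ContDiff ℝ 1 g := hg.of_le (by exact_mod_cast le_top)
  have cf' := hf1.continuous_fderiv (by norm_num)
  have cg' := hg1.continuous_fderiv (by norm_num)
  obtain ⟨C1, h1⟩ := hfc.exists_bound_of_continuous hf.continuous
  obtain ⟨C2, h2⟩ := hgc.exists_bound_of_continuous hg.continuous
  obtain ⟨C3, h3⟩ := (hfc.fderiv (𝕜 := ℝ)).exists_bound_of_continuous cf'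
  obtain ⟨C4, h4⟩ := (hgc.fderiv (𝕜 := ℝ)).exists_bound_of_continuous cg'
  set C := max (max C1 C2) (max C3 C4) with hC
  have hCf : ∀ x, |f x| ≤ C := fun x => (h1 x).trans (by simp [hC])
  have hCg : ∀ x, |g x| ≤ C := fun x => (h2 x).trans (by simp [hC])
  have hCf' : ∀ x, ‖fderiv ℝ f x‖ ≤ C := fun x => (h3 x).trans (by simp [hC])
  have hCg' : ∀ x, ‖fderiv ℝ g x‖ ≤ C := fun x => (h4 x).trans (by simp [hC])
  set A := eLpNorm (fun x => ‖gradient f x‖) p (stdGaussian d) *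
        eLpNorm (fun x => ‖gradient g x‖) q (stdGaussian d) with hA
  have cG := GaussCov.cont_grad d g hg1
  have cF := GaussCov.cont_grad d f hf1
  have hAtop : A ≠ ∞ := by
    refine ENNReal.mul_ne_top ?_ ?_
    · exact (MemLp.of_bound (p := p) (by fun_prop) C
        (.of_forall fun x => by simpa [GaussCov.norm_grad] using hCf' x)).2.ne
    · exact (MemLp.of_bound (p := q) (by fun_prop) C
        (.of_forall fun x => by simpa [GaussCov.norm_grad] using hCg' x)).2.ne
  have hPhi : ∀ θ, HasDerivAt (GaussCov.Phi d f g)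
      (- sin θ * ∫ w, inner ℝ (gradient f w.1) (gradient g (cos θ • w.1 + sin θ • w.2))
        ∂((stdGaussian d).prod (stdGaussian d))) θ := by
    intro θ
    rw [← GaussCov.Phi_deriv_eq d f g hf1 hg1 C hCf hCg hCf' hCg' θ]
    exact (GaussCov.Phi_deriv d f g hf1 hg1 C hCf hCg hCg' θ).2
  have e0 : GaussCov.Phi d f g 0 = ∫ x, f x * g x ∂(stdGaussian d) := by
    simp only [GaussCov.Phi, cos_zero, sin_zero, one_smul, zero_smul, add_zero]
    rw [integral_fun_fst (f := fun x => f x * g x)]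
    simp
  have e1 : GaussCov.Phi d f g (π / 2) =
      (∫ x, f x ∂(stdGaussian d)) * (∫ x, g x ∂(stdGaussian d)) := by
    simp only [GaussCov.Phi, cos_pi_div_two, sin_pi_div_two, one_smul, zero_smul, zero_add]
    exact integral_prod_mul f g
  rw [← e0, ← e1]
  have key := image_norm_le_of_norm_deriv_right_le_deriv_boundary (a := 0) (b := π / 2)
    (f := fun θ => GaussCov.Phi d f g 0 - GaussCov.Phi d f g θ)
    (f' := fun θ => - (- sin θ * ∫ w, inner ℝ (gradient f w.1)
      (gradient g (cos θ • w.1 + sin θ • w.2)) ∂((stdGaussian d).prod (stdGaussian d))))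
    (B := fun θ => A.toReal * (1 - cos θ)) (B' := fun θ => A.toReal * sin θ)
    (fun θ _ => ((hPhi θ).const_sub _).continuousAt.continuousWithinAt)
    (fun θ _ => ((hPhi θ).const_sub _).hasDerivWithinAt) (by simp)
    (fun θ => by simpa using ((hasDerivAt_cos θ).const_sub 1).const_mul A.toReal) ?_
    (x := π / 2) ⟨by positivity, le_rfl⟩
  · rw [cos_pi_div_two, sub_zero, mul_one] at key
    exact ENNReal.ofReal_le_of_le_toReal key
  · intro θ hθ
    have s0 : 0 ≤ sin θ := sin_nonneg_of_nonneg_of_le_pi hθ.1 (by linarith [hθ.2, pi_pos])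
    have hb := GaussCov.holder_bound d f g hf1 hg1 p q hpq θ
    rw [← hA, ENNReal.ofReal_le_iff_le_toReal hAtop] at hb
    rw [norm_neg, norm_mul, norm_neg, norm_eq_abs, norm_eq_abs, abs_of_nonneg s0, mul_comm]
    gcongr
end

section
/- For the standard Gaussian measure γ on ℝ^d, every p ∈ [2,∞), and every Schwartz function f with ∫ f dγ = 0, one has ‖f‖_{L^p(γ)} ≤ √(p-1) · ‖∇f‖_{L^p(γ)}, where ‖∇f‖_{L^p(γ)} = (∫ ‖∇f(x)‖^p γ(dx))^{1/p}. -/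
open MeasureTheory Real Set
open scoped ENNReal

open scoped RealInnerProductSpace

lemma gpl_density_integrable (d : ℕ) :
    Integrable (fun x : EuclideanSpace ℝ (Fin d) =>
      (2 * π) ^ (-(d : ℝ) / 2) * Real.exp (-‖x‖ ^ 2 / 2)) := by
  apply Integrable.const_mul
  have h := (GaussianFourier.integrable_cexp_neg_mul_sq_norm_add
    (b := (1/2 : ℂ)) (by norm_num) 0 (0 : EuclideanSpace ℝ (Fin d))).norm
  refine h.congr (Filter.Eventually.of_forall fun x => ?_)
  simp only [Complex.norm_exp]
  congr 1
  have : (-(1/2 : ℂ) * (‖x‖:ℂ) ^ 2 + 0 * ((⟪(0 : EuclideanSpace ℝ (Fin d)), x⟫ : ℝ) : ℂ)) = ((-‖x‖ ^ 2 / 2 : ℝ) : ℂ) := by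
    push_cast; ring
  rw [this, Complex.ofReal_re]

lemma gpl_density_integral (d : ℕ) :
    ∫ x : EuclideanSpace ℝ (Fin d),
      (2 * π) ^ (-(d : ℝ) / 2) * Real.exp (-‖x‖ ^ 2 / 2) = 1 := by
  rw [integral_const_mul]
  have h := GaussianFourier.integral_rexp_neg_mul_sq_norm (V := EuclideanSpace ℝ (Fin d))
    (b := 1/2) (by norm_num)
  have h2 : ∀ x : EuclideanSpace ℝ (Fin d), -‖x‖ ^ 2 / 2 = -(1/2) * ‖x‖ ^ 2 := fun x => by ring
  simp_rw [h2]
  rw [h, finrank_euclideanSpace_fin]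
  have : π / (1/2) = 2 * π := by ring
  rw [this, ← Real.rpow_add (by positivity)]
  ring_nf
  simp

instance gpl_prob (d : ℕ) : IsProbabilityMeasure (stdGaussian d) := by
  constructor
  rw [stdGaussian, withDensity_apply _ MeasurableSet.univ, Measure.restrict_univ,
    ← ofReal_integral_eq_lintegral_ofReal (gpl_density_integrable d)
      (Filter.Eventually.of_forall fun x => by positivity), gpl_density_integral]
  simp

lemma gpl_integral_eq {F : Type*} [NormedAddCommGroup F] [NormedSpace ℝ F] (d : ℕ)
    (g : EuclideanSpace ℝ (Fin d) → F) :
    ∫ x, g x ∂(stdGaussian d) =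
      ∫ x, ((2 * π) ^ (-(d : ℝ) / 2) * Real.exp (-‖x‖ ^ 2 / 2)) • g x := by
  rw [stdGaussian, integral_withDensity_eq_integral_toReal_smul]
  · refine integral_congr_ae (Filter.Eventually.of_forall fun x => ?_)
    simp only
    rw [ENNReal.toReal_ofReal (by positivity)]
  · fun_prop
  · simp

lemma gpl_integrable_iff {F : Type*} [NormedAddCommGroup F] [NormedSpace ℝ F] (d : ℕ)
    (g : EuclideanSpace ℝ (Fin d) → F) :
    Integrable g (stdGaussian d) ↔
      Integrable (fun x => ((2 * π) ^ (-(d : ℝ) / 2) * Real.exp (-‖x‖ ^ 2 / 2)) • g x) := by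
  rw [stdGaussian, integrable_withDensity_iff_integrable_smul']
  · refine integrable_congr (Filter.Eventually.of_forall fun x => ?_)
    simp only
    rw [ENNReal.toReal_ofReal (by positivity)]
  · fun_prop
  · simp

lemma gpl_eq (d : ℕ) : stdGaussian d = ProbabilityTheory.stdGaussian (EuclideanSpace ℝ (Fin d)) := by
  apply Measure.ext_of_charFun
  ext t
  rw [ProbabilityTheory.charFun_stdGaussian, charFun_apply, gpl_integral_eq]
  have h := GaussianFourier.integral_cexp_neg_mul_sq_norm_add
    (b := (1/2 : ℂ)) (by norm_num) Complex.I t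
  have h2 : ∀ x : EuclideanSpace ℝ (Fin d),
     ((2 * π) ^ (-(d : ℝ) / 2) * Real.exp (-‖x‖ ^ 2 / 2)) • Complex.exp (⟪x, t⟫ * Complex.I)
     = (((2 * π) ^ (-(d : ℝ) / 2) : ℝ) : ℂ) *
       Complex.exp (-(1/2) * ‖x‖^2 + Complex.I * ⟪t, x⟫) := by
    intro x
    rw [Complex.real_smul, real_inner_comm x t, Complex.exp_add]
    push_cast
    ring_nf
  simp_rw [h2]
  rw [integral_const_mul, h, finrank_euclideanSpace_fin, ← mul_assoc]
  have h3 : ((π : ℂ) / (1/2)) ^ ((d : ℂ) / 2) = (((2 * π) ^ ((d : ℝ) / 2) : ℝ) : ℂ) := by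
    rw [Complex.ofReal_cpow (by positivity)]
    push_cast
    congr 1
    ring
  rw [h3, ← Complex.ofReal_mul, ← Real.rpow_add (by positivity)]
  have h4 : -(d : ℝ) / 2 + d / 2 = 0 := by ring
  rw [h4]
  simp only [Real.rpow_zero, Complex.ofReal_one, one_mul, Complex.I_sq]
  congr 1
  ring

instance gpl_gauss (d : ℕ) : ProbabilityTheory.IsGaussian (stdGaussian d) := by
  rw [gpl_eq]; infer_instance

lemma gpl_rot (d : ℕ) (θ : ℝ) :
    ((stdGaussian d).prod (stdGaussian d)).map (ContinuousLinearMap.rotation θ)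
      = (stdGaussian d).prod (stdGaussian d) := by
  apply ProbabilityTheory.IsGaussian.map_rotation_eq_self
  rw [gpl_eq]
  simp

lemma gpl_norm_int (d : ℕ) : Integrable (fun x => ‖x‖) (stdGaussian d) :=
  (ProbabilityTheory.IsGaussian.integrable_id (μ := stdGaussian d)).norm

lemma gpl_density_fderiv (d : ℕ) (w x : EuclideanSpace ℝ (Fin d)) :
    DifferentiableAt ℝ (fun x : EuclideanSpace ℝ (Fin d) =>
      (2 * π) ^ (-(d : ℝ) / 2) * Real.exp (-‖x‖ ^ 2 / 2)) x ∧
    fderiv ℝ (fun x : EuclideanSpace ℝ (Fin d) =>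
      (2 * π) ^ (-(d : ℝ) / 2) * Real.exp (-‖x‖ ^ 2 / 2)) x w =
      -(((2 * π) ^ (-(d : ℝ) / 2) * Real.exp (-‖x‖ ^ 2 / 2)) * ⟪w, x⟫) := by
  have h1 := ((((hasStrictFDerivAt_norm_sq x).hasFDerivAt).const_mul (-1/2 : ℝ)).exp).const_mul
    ((2 * π) ^ (-(d : ℝ) / 2))
  have h2 : (fun x : EuclideanSpace ℝ (Fin d) =>
      (2 * π) ^ (-(d : ℝ) / 2) * Real.exp (-1 / 2 * ‖x‖ ^ 2)) = (fun x =>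
      (2 * π) ^ (-(d : ℝ) / 2) * Real.exp (-‖x‖ ^ 2 / 2)) := by
    funext x
    congr 2
    ring
  rw [h2] at h1
  refine ⟨h1.differentiableAt, ?_⟩
  rw [h1.fderiv]
  have h3 : -1 / 2 * ‖x‖ ^ 2 = -‖x‖ ^ 2 / 2 := by ring
  simp only [h3, smul_apply, innerSL_apply_apply, smul_eq_mul, nsmul_eq_mul,
    real_inner_comm]
  push_cast
  ring

lemma gpl_ibp (d : ℕ) (g : EuclideanSpace ℝ (Fin d) → ℝ) (hg : ContDiff ℝ 1 g) (A B : ℝ)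
    (hA : ∀ x, |g x| ≤ A) (hB : ∀ x, ‖fderiv ℝ g x‖ ≤ B) (w : EuclideanSpace ℝ (Fin d)) :
    ∫ v, g v * ⟪w, v⟫ ∂(stdGaussian d) = ∫ v, fderiv ℝ g v w ∂(stdGaussian d) := by
  have hcont := hg.continuous
  have hcd : Continuous (fun x => fderiv ℝ g x) := hg.continuous_fderiv (by norm_num)
  have i1 : Integrable (fun v => g v) (stdGaussian d) :=
    Integrable.of_bound hcont.aestronglyMeasurable A (Filter.Eventually.of_forall hA)
  have i2 : Integrable (fun v => fderiv ℝ g v w) (stdGaussian d) := by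
    refine Integrable.of_bound (C := B * ‖w‖) (by fun_prop) (Filter.Eventually.of_forall fun x => ?_)
    exact ContinuousLinearMap.le_of_opNorm_le _ (hB x) w
  have i3 : Integrable (fun v => g v * ⟪w, v⟫) (stdGaussian d) := by
    refine ((gpl_norm_int d).const_mul (A * ‖w‖)).mono' (by fun_prop)
      (Filter.Eventually.of_forall fun x => ?_)
    rw [norm_mul, mul_assoc]
    exact mul_le_mul (hA x) (norm_inner_le_norm _ _) (norm_nonneg _) ((abs_nonneg _).trans (hA x))
  rw [gpl_integrable_iff] at i1 i2 i3
  rw [gpl_integral_eq, gpl_integral_eq]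
  have hd := fun x => (gpl_density_fderiv d w x).1
  have hfd := fun x => (gpl_density_fderiv d w x).2
  obtain ⟨r, hr⟩ : ∃ r, r = (fun x : EuclideanSpace ℝ (Fin d) =>
    (2 * π) ^ (-(d : ℝ) / 2) * Real.exp (-‖x‖ ^ 2 / 2)) := ⟨_, rfl⟩
  have hr' : ∀ x : EuclideanSpace ℝ (Fin d),
    (2 * π) ^ (-(d : ℝ) / 2) * Real.exp (-‖x‖ ^ 2 / 2) = r x := fun x => by rw [hr]
  rw [← hr] at hd hfd
  simp only [hr', smul_eq_mul] at hfd i1 i2 i3 ⊢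
  have key := integral_mul_fderiv_eq_neg_fderiv_mul_of_integrable (μ := volume) (f := r) (g := g) (v := w)
    (by refine i3.neg.congr (Filter.Eventually.of_forall fun x => ?_)
        simp only [Pi.neg_apply, hfd]; ring)
    i2
    i1
    (fun x _ => hd x)
    (fun x _ => hg.differentiable (by norm_num) x)
  rw [key, ← integral_neg]
  refine integral_congr_ae (Filter.Eventually.of_forall fun x => ?_)
  simp only [hfd]
  ring

/-- `G(rot z)` form of the derivative is bounded below by `- sin θ * K`. -/
lemma gpl_deriv_bound (d : ℕ) (h f : EuclideanSpace ℝ (Fin d) → ℝ)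
    (hh : ContDiff ℝ 1 h) (hf : ContDiff ℝ 1 f) (A B C : ℝ)
    (hA : ∀ x, |h x| ≤ A) (hB : ∀ x, ‖fderiv ℝ h x‖ ≤ B) (hC : ∀ x, ‖fderiv ℝ f x‖ ≤ C)
    (θ : ℝ) (hθ : 0 ≤ sin θ) :
    - (sin θ * ∫ z, ‖fderiv ℝ h z.1‖ * ‖fderiv ℝ f (cos θ • z.1 + sin θ • z.2)‖
        ∂((stdGaussian d).prod (stdGaussian d))) ≤
    ∫ z, h z.1 * fderiv ℝ f (cos θ • z.1 + sin θ • z.2) (-sin θ • z.1 + cos θ • z.2)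
        ∂((stdGaussian d).prod (stdGaussian d)) := by
  have hA0 : 0 ≤ A := (abs_nonneg _).trans (hA 0)
  have hB0 : 0 ≤ B := (norm_nonneg _).trans (hB 0)
  have hC0 : 0 ≤ C := (norm_nonneg _).trans (hC 0)
  have chd : Continuous (fun x => fderiv ℝ h x) := hh.continuous_fderiv (by norm_num)
  have cfd : Continuous (fun x => fderiv ℝ f x) := hf.continuous_fderiv (by norm_num)
  have ch := hh.continuous
  have cf := hf.continuous
  set γ := stdGaussian d with hγ
  have hrot : ∀ z : EuclideanSpace ℝ (Fin d) × EuclideanSpace ℝ (Fin d),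
      cos θ • (cos θ • z.1 + sin θ • z.2) - sin θ • (-sin θ • z.1 + cos θ • z.2) = z.1 := by
    intro z
    have : cos θ • (cos θ • z.1 + sin θ • z.2) - sin θ • (-sin θ • z.1 + cos θ • z.2)
      = (sin θ ^ 2 + cos θ ^ 2) • z.1 := by module
    rw [this, sin_sq_add_cos_sq, one_smul]
  have cG : Continuous (fun z : EuclideanSpace ℝ (Fin d) × EuclideanSpace ℝ (Fin d) =>
      h (cos θ • z.1 - sin θ • z.2) * fderiv ℝ f z.1 z.2) := by fun_prop
  have cH : Continuous (fun z : EuclideanSpace ℝ (Fin d) × EuclideanSpace ℝ (Fin d) =>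
      ‖fderiv ℝ h (cos θ • z.1 - sin θ • z.2)‖ * ‖fderiv ℝ f z.1‖) := by fun_prop
  have mrot : Measurable (ContinuousLinearMap.rotation (E := EuclideanSpace ℝ (Fin d)) θ) :=
    (ContinuousLinearMap.rotation (E := EuclideanSpace ℝ (Fin d)) θ).continuous.measurable
  have e1 : ∫ z, h z.1 * fderiv ℝ f (cos θ • z.1 + sin θ • z.2) (-sin θ • z.1 + cos θ • z.2)
        ∂(γ.prod γ) =
      ∫ z, h (cos θ • z.1 - sin θ • z.2) * fderiv ℝ f z.1 z.2 ∂(γ.prod γ) := by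
    conv_rhs => rw [hγ, ← gpl_rot d θ]
    rw [integral_map mrot.aemeasurable cG.aestronglyMeasurable]
    refine integral_congr_ae (Filter.Eventually.of_forall fun z => ?_)
    simp only [ContinuousLinearMap.rotation_apply, hrot]
  have e2 : ∫ z, ‖fderiv ℝ h z.1‖ * ‖fderiv ℝ f (cos θ • z.1 + sin θ • z.2)‖ ∂(γ.prod γ) =
      ∫ z, ‖fderiv ℝ h (cos θ • z.1 - sin θ • z.2)‖ * ‖fderiv ℝ f z.1‖ ∂(γ.prod γ) := by
    conv_rhs => rw [hγ, ← gpl_rot d θ]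
    rw [integral_map mrot.aemeasurable cH.aestronglyMeasurable]
    refine integral_congr_ae (Filter.Eventually.of_forall fun z => ?_)
    simp only [ContinuousLinearMap.rotation_apply, hrot]
  have iH : Integrable (fun z : EuclideanSpace ℝ (Fin d) × EuclideanSpace ℝ (Fin d) =>
      ‖fderiv ℝ h (cos θ • z.1 - sin θ • z.2)‖ * ‖fderiv ℝ f z.1‖) (γ.prod γ) := by
    refine Integrable.of_bound cH.aestronglyMeasurable (B * C)
      (Filter.Eventually.of_forall fun z => ?_)
    rw [norm_mul, norm_norm, norm_norm]
    exact mul_le_mul (hB _) (hC _) (norm_nonneg _) hB0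
  have iG : Integrable (fun z : EuclideanSpace ℝ (Fin d) × EuclideanSpace ℝ (Fin d) =>
      h (cos θ • z.1 - sin θ • z.2) * fderiv ℝ f z.1 z.2) (γ.prod γ) := by
    have i0 : Integrable (fun z : EuclideanSpace ℝ (Fin d) × EuclideanSpace ℝ (Fin d) => ‖z.2‖)
      (γ.prod γ) := (gpl_norm_int d).comp_snd γ
    refine (i0.const_mul (A * C)).mono' cG.aestronglyMeasurable
      (Filter.Eventually.of_forall fun z => ?_)
    rw [norm_mul, mul_assoc]
    exact mul_le_mul (hA _) (ContinuousLinearMap.le_of_opNorm_le _ (hC _) _) (norm_nonneg _) hA0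
  rw [e1, e2, integral_prod _ iG, integral_prod _ iH, ← integral_const_mul, ← integral_neg]
  refine integral_mono (iH.integral_prod_left.const_mul _).neg iG.integral_prod_left fun u => ?_
  simp only
  set w := (InnerProductSpace.toDual ℝ (EuclideanSpace ℝ (Fin d))).symm (fderiv ℝ f u) with hw
  have hwn : ‖w‖ = ‖fderiv ℝ f u‖ := by rw [hw, LinearIsometryEquiv.norm_map]
  have hfd : ∀ v, fderiv ℝ (fun v => h (cos θ • u - sin θ • v)) v =
      (-sin θ) • fderiv ℝ h (cos θ • u - sin θ • v) := by
    intro v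
    have h1 : HasFDerivAt (fun v : EuclideanSpace ℝ (Fin d) => cos θ • u - sin θ • v)
        (-(sin θ • ContinuousLinearMap.id ℝ _)) v :=
      ((hasFDerivAt_id v).const_smul (sin θ)).const_sub _
    have h2 := ((hh.differentiable (by norm_num) (cos θ • u - sin θ • v)).hasFDerivAt).comp v h1
    have h3 := h2.fderiv
    simp only [Function.comp_def] at h3
    rw [h3]
    ext y
    simp
  have ibp := gpl_ibp d (fun v => h (cos θ • u - sin θ • v)) (by fun_prop) A (|sin θ| * B)
    (fun x => hA _) (fun v => by
      rw [hfd, norm_smul, norm_neg, Real.norm_eq_abs]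
      exact mul_le_mul_of_nonneg_left (hB _) (abs_nonneg _)) w
  have e3 : ∀ v, fderiv ℝ f u v = ⟪w, v⟫ := fun v => by
    rw [hw, InnerProductSpace.toDual_symm_apply]
  simp only [e3]
  rw [ibp, ← integral_const_mul, ← integral_neg]
  refine integral_mono ?_ ?_ fun v => ?_
  · refine Integrable.of_bound (C := |sin θ| * (B * C)) ?_ (Filter.Eventually.of_forall fun v => ?_)
    · exact Continuous.aestronglyMeasurable (by fun_prop)
    · rw [norm_neg, norm_mul, norm_mul, norm_norm, norm_norm]
      exact mul_le_mul_of_nonneg_left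
        (mul_le_mul (hB _) (hC _) (norm_nonneg _) hB0) (abs_nonneg _)
  · simp only [hfd]
    refine Integrable.of_bound (C := |sin θ| * (B * ‖w‖)) ?_ (Filter.Eventually.of_forall fun v => ?_)
    · exact Continuous.aestronglyMeasurable (by fun_prop)
    · rw [smul_apply, smul_eq_mul, norm_mul, norm_neg]
      exact mul_le_mul_of_nonneg_left
        (ContinuousLinearMap.le_of_opNorm_le _ (hB _) _) (abs_nonneg _)
  · simp only [hfd, smul_apply, smul_eq_mul, ← hwn]
    have := (le_abs_self _).trans ((fderiv ℝ h (cos θ • u - sin θ • v)).le_opNorm w)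
    nlinarith

lemma gpl_cov (d : ℕ) (h f : EuclideanSpace ℝ (Fin d) → ℝ)
    (hh : ContDiff ℝ 1 h) (hf : ContDiff ℝ 1 f) (A A' B C K : ℝ)
    (hA : ∀ x, |h x| ≤ A) (hA' : ∀ x, |f x| ≤ A')
    (hB : ∀ x, ‖fderiv ℝ h x‖ ≤ B) (hC : ∀ x, ‖fderiv ℝ f x‖ ≤ C)
    (hK : ∀ θ, ∫ z, ‖fderiv ℝ h z.1‖ * ‖fderiv ℝ f (cos θ • z.1 + sin θ • z.2)‖
        ∂((stdGaussian d).prod (stdGaussian d)) ≤ K)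
    (hf0 : ∫ x, f x ∂(stdGaussian d) = 0) :
    ∫ x, h x * f x ∂(stdGaussian d) ≤ K := by
  have hA0 : 0 ≤ A := (abs_nonneg _).trans (hA 0)
  have hC0 : 0 ≤ C := (norm_nonneg _).trans (hC 0)
  have cfd : Continuous (fun x => fderiv ℝ f x) := hf.continuous_fderiv (by norm_num)
  have ch := hh.continuous
  have cf := hf.continuous
  set γ := stdGaussian d with hγ
  let F : ℝ → ℝ := fun θ => ∫ z, h z.1 * f (cos θ • z.1 + sin θ • z.2) ∂(γ.prod γ)
  let F' : ℝ → ℝ := fun θ => ∫ z, h z.1 *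
    fderiv ℝ f (cos θ • z.1 + sin θ • z.2) (-sin θ • z.1 + cos θ • z.2) ∂(γ.prod γ)
  have hF : ∀ θ, HasDerivAt F (F' θ) θ := by
    intro θ
    have i1 : Integrable (fun z : EuclideanSpace ℝ (Fin d) × EuclideanSpace ℝ (Fin d) => ‖z.1‖)
      (γ.prod γ) := (gpl_norm_int d).comp_fst γ
    have i2 : Integrable (fun z : EuclideanSpace ℝ (Fin d) × EuclideanSpace ℝ (Fin d) => ‖z.2‖)
      (γ.prod γ) := (gpl_norm_int d).comp_snd γ
    refine (hasDerivAt_integral_of_dominated_loc_of_deriv_le (μ := γ.prod γ)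
      (F := fun θ z => h z.1 * f (cos θ • z.1 + sin θ • z.2))
      (F' := fun θ z => h z.1 *
        fderiv ℝ f (cos θ • z.1 + sin θ • z.2) (-sin θ • z.1 + cos θ • z.2))
      (bound := fun z => A * (C * (‖z.1‖ + ‖z.2‖)))
      (s := univ) Filter.univ_mem ?_ ?_ ?_ ?_ ?_ ?_).2
    · exact Filter.Eventually.of_forall fun t => Continuous.aestronglyMeasurable (by fun_prop)
    · refine Integrable.of_bound (C := A * A') (Continuous.aestronglyMeasurable (by fun_prop))
        (Filter.Eventually.of_forall fun z => ?_)
      rw [norm_mul]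
      exact mul_le_mul (hA _) (hA' _) (norm_nonneg _) hA0
    · exact Continuous.aestronglyMeasurable (by fun_prop)
    · refine Filter.Eventually.of_forall fun z t _ => ?_
      rw [norm_mul]
      refine mul_le_mul (hA _) ?_ (norm_nonneg _) hA0
      refine (ContinuousLinearMap.le_of_opNorm_le _ (hC _) _).trans ?_
      refine mul_le_mul_of_nonneg_left ?_ hC0
      refine (norm_add_le _ _).trans ?_
      rw [norm_smul, norm_smul, norm_neg]
      refine add_le_add ?_ ?_
      · exact mul_le_of_le_one_left (norm_nonneg _) (abs_sin_le_one t)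
      · exact mul_le_of_le_one_left (norm_nonneg _) (abs_cos_le_one t)
    · exact ((i1.add i2).const_mul C).const_mul A
    · refine Filter.Eventually.of_forall fun z t _ => ?_
      have h1 : HasDerivAt (fun t => cos t • z.1 + sin t • z.2) (-sin t • z.1 + cos t • z.2) t :=
        ((hasDerivAt_cos t).smul_const z.1).add ((hasDerivAt_sin t).smul_const z.2)
      have h2 := ((hf.differentiable (by norm_num)
        (cos t • z.1 + sin t • z.2)).hasFDerivAt).comp_hasDerivAt t h1
      exact h2.const_mul (h z.1)
  have hanti : AntitoneOn (fun θ => K * cos θ - F θ) (Icc 0 (π / 2)) := by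
    have hD : ∀ θ, HasDerivAt (fun θ => K * cos θ - F θ) (K * (-sin θ) - F' θ) θ := fun θ =>
      ((hasDerivAt_cos θ).const_mul K).sub (hF θ)
    refine antitoneOn_of_deriv_nonpos (convex_Icc _ _)
      (fun θ _ => (hD θ).continuousAt.continuousWithinAt)
      (fun θ _ => (hD θ).differentiableAt.differentiableWithinAt) fun θ hθ => ?_
    rw [interior_Icc] at hθ
    rw [(hD θ).deriv]
    have hs : 0 ≤ sin θ := sin_nonneg_of_nonneg_of_le_pi hθ.1.le (by linarith [hθ.2, pi_pos])
    have := gpl_deriv_bound d h f hh hf A B C hA hB hC θ hs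
    have h3 := mul_le_mul_of_nonneg_left (hK θ) hs
    simp only [F']
    linarith
  have h0 := hanti (left_mem_Icc.2 (by positivity)) (right_mem_Icc.2 (by positivity))
    (by positivity : (0 : ℝ) ≤ π / 2)
  have F0 : F 0 = ∫ x, h x * f x ∂γ := by
    simp only [F, cos_zero, sin_zero, one_smul, zero_smul, add_zero]
    rw [integral_fun_fst (fun x => h x * f x)]
    simp
  have F1 : F (π / 2) = 0 := by
    simp only [F, cos_pi_div_two, sin_pi_div_two, one_smul, zero_smul, zero_add]
    rw [integral_prod_mul (fun x => h x) (fun x => f x), hf0, mul_zero]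
  simp only [F0, F1, cos_pi_div_two, cos_zero] at h0
  linarith

lemma gpl_phi_deriv (p : ℝ) (hp : 2 ≤ p) (t : ℝ) :
    HasDerivAt (fun t : ℝ => |t| ^ (p - 2) * t) ((p - 1) * |t| ^ (p - 2)) t := by
  rcases eq_or_ne t 0 with rfl | ht
  · rcases eq_or_lt_of_le hp with rfl | hp'
    · simp only [sub_self, Real.rpow_zero, one_mul]
      norm_num
      exact hasDerivAt_id' 0
    · rw [hasDerivAt_iff_tendsto_slope]
      have hc : Filter.Tendsto (fun t : ℝ => |t| ^ (p - 2)) (nhdsWithin 0 {0}ᶜ)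
          (nhds (|0| ^ (p - 2))) := by
        have : Continuous (fun t : ℝ => |t| ^ (p - 2)) :=
          continuous_abs.rpow_const fun x => Or.inr (by linarith)
        exact (this.tendsto 0).mono_left nhdsWithin_le_nhds
      have h0 : |(0 : ℝ)| ^ (p - 2) = 0 := by
        rw [abs_zero, Real.zero_rpow (by linarith)]
      rw [h0] at hc ⊢
      rw [mul_zero]
      refine hc.congr' ?_
      filter_upwards [self_mem_nhdsWithin] with x hx
      have hx' : x ≠ 0 := hx
      simp only [slope_def_field, mul_zero, sub_zero]
      field_simp
  · have h1 := ((hasDerivAt_abs ht).rpow_const (p := p - 2) (Or.inl (abs_ne_zero.2 ht))).mul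
      (hasDerivAt_id' t)
    refine h1.congr_deriv ?_
    have h2 : |t| ^ (p - 2) = |t| ^ (p - 2 - 1) * |t| := by
      conv_rhs => rw [← Real.rpow_add_one (abs_ne_zero.2 ht)]
      ring_nf
    have h3 : (SignType.sign t : ℝ) * t = |t| := by
      rw [mul_comm]; exact self_mul_sign t
    calc _ = (p - 2) * |t| ^ (p - 2 - 1) * ((SignType.sign t : ℝ) * t) + |t| ^ (p - 2) := by ring
      _ = (p - 1) * |t| ^ (p - 2) := by rw [h3, h2]; ring

lemma gpl_phi_contDiff (p : ℝ) (hp : 2 ≤ p) :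
    ContDiff ℝ 1 (fun t : ℝ => |t| ^ (p - 2) * t) := by
  rw [contDiff_one_iff_deriv]
  refine ⟨fun t => (gpl_phi_deriv p hp t).differentiableAt, ?_⟩
  have : deriv (fun t : ℝ => |t| ^ (p - 2) * t) = fun t => (p - 1) * |t| ^ (p - 2) :=
    funext fun t => (gpl_phi_deriv p hp t).deriv
  rw [this]
  exact continuous_const.mul (continuous_abs.rpow_const fun x => Or.inr (by linarith))

lemma gpl_holder (d : ℕ) (p : ℝ) (hp : 2 ≤ p) (f : EuclideanSpace ℝ (Fin d) → ℝ)
    (hf : ContDiff ℝ 1 f) (θ : ℝ) :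
    ∫⁻ z, ‖f z.1‖ₑ ^ (p - 2) * (‖fderiv ℝ f z.1‖ₑ * ‖fderiv ℝ f (cos θ • z.1 + sin θ • z.2)‖ₑ)
      ∂((stdGaussian d).prod (stdGaussian d)) ≤
    (∫⁻ x, ‖f x‖ₑ ^ p ∂(stdGaussian d)) ^ ((p - 2) / p) *
      ((∫⁻ x, ‖fderiv ℝ f x‖ₑ ^ p ∂(stdGaussian d)) ^ (1 / p) *
       (∫⁻ x, ‖fderiv ℝ f x‖ₑ ^ p ∂(stdGaussian d)) ^ (1 / p)) := by
  have cfd : Continuous (fun x => fderiv ℝ f x) := hf.continuous_fderiv (by norm_num)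
  have cf := hf.continuous
  have hp0 : p ≠ 0 := by linarith
  have mrot : Measurable (ContinuousLinearMap.rotation (E := EuclideanSpace ℝ (Fin d)) θ) :=
    (ContinuousLinearMap.rotation (E := EuclideanSpace ℝ (Fin d)) θ).continuous.measurable
  have m1 : Measurable (fun x => ‖f x‖ₑ ^ p) := cf.measurable.enorm.pow_const p
  have m2 : Measurable (fun x => ‖fderiv ℝ f x‖ₑ ^ p) := (cfd.enorm.measurable).pow_const p
  have fst : ∀ g : EuclideanSpace ℝ (Fin d) → ℝ≥0∞, Measurable g →
      ∫⁻ z, g z.1 ∂((stdGaussian d).prod (stdGaussian d)) = ∫⁻ x, g x ∂(stdGaussian d) := by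
    intro g hg
    rw [lintegral_prod (fun z => g z.1) (hg.comp measurable_fst).aemeasurable]
    simp
  have hrot : ∀ g : EuclideanSpace ℝ (Fin d) → ℝ≥0∞, Measurable g →
      ∫⁻ z, g (cos θ • z.1 + sin θ • z.2) ∂((stdGaussian d).prod (stdGaussian d))
        = ∫⁻ x, g x ∂(stdGaussian d) := by
    intro g hg
    rw [← fst g hg]
    conv_rhs => rw [← gpl_rot d θ]
    have hgm : Measurable (fun z : EuclideanSpace ℝ (Fin d) × EuclideanSpace ℝ (Fin d) => g z.1) :=
      hg.comp measurable_fst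
    rw [lintegral_map hgm mrot]
    simp only [ContinuousLinearMap.rotation_apply]
  have H := ENNReal.lintegral_prod_norm_pow_le (μ := (stdGaussian d).prod (stdGaussian d))
    (Finset.univ : Finset (Fin 3))
    (f := ![fun z => ‖f z.1‖ₑ ^ p, fun z => ‖fderiv ℝ f z.1‖ₑ ^ p,
      fun z => ‖fderiv ℝ f (cos θ • z.1 + sin θ • z.2)‖ₑ ^ p])
    (p := ![(p - 2) / p, 1 / p, 1 / p])
    (by
      intro i _
      fin_cases i
      · exact (m1.comp measurable_fst).aemeasurable
      · exact (m2.comp measurable_fst).aemeasurable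
      · exact (m2.comp (by fun_prop : Measurable fun z : EuclideanSpace ℝ (Fin d) ×
          EuclideanSpace ℝ (Fin d) => cos θ • z.1 + sin θ • z.2)).aemeasurable)
    (by simp [Fin.sum_univ_succ]; field_simp; ring)
    (by
      intro i _
      fin_cases i
      · exact div_nonneg (by linarith) (by linarith)
      · exact div_nonneg (by linarith) (by linarith)
      · exact div_nonneg (by linarith) (by linarith))
  simp only [Fin.prod_univ_three, Matrix.cons_val_zero, Matrix.cons_val_one, Matrix.cons_val,
    ← ENNReal.rpow_mul, mul_div_cancel₀ _ hp0, ENNReal.rpow_one] at H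
  rw [fst _ m1, fst _ m2, hrot _ m2] at H
  simpa only [mul_assoc, mul_div_cancel₀ _ hp0, mul_div_cancel_left₀ _ hp0] using H

lemma gpl_enn (p : ℝ) (hp : 2 ≤ p) (a b : ℝ≥0∞) (ha : a ≠ ⊤)
    (h : a ≤ ENNReal.ofReal (p - 1) * (a ^ ((p - 2) / p) * (b ^ (1 / p) * b ^ (1 / p)))) :
    a ^ (1 / p) ≤ ENNReal.ofReal (Real.sqrt (p - 1)) * b ^ (1 / p) := by
  have hp0 : 0 < p := by linarith
  rcases eq_or_ne a 0 with rfl | h0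
  · rw [ENNReal.zero_rpow_of_pos (by positivity)]; exact zero_le
  have e : a = a ^ ((p - 2) / p) * (a ^ (1 / p) * a ^ (1 / p)) := by
    rw [← ENNReal.rpow_add _ _ h0 ha, ← ENNReal.rpow_add _ _ h0 ha]
    have : (p - 2) / p + (1 / p + 1 / p) = 1 := by field_simp; ring
    rw [this, ENNReal.rpow_one]
  have hc0 : a ^ ((p - 2) / p) ≠ 0 := by
    simp [ENNReal.rpow_eq_zero_iff, h0, ha]
  have hct : a ^ ((p - 2) / p) ≠ ⊤ := by
    simp [ENNReal.rpow_eq_top_iff, h0, ha]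
  have h1 : a ^ ((p - 2) / p) * (a ^ (1 / p) * a ^ (1 / p)) ≤
      a ^ ((p - 2) / p) * (ENNReal.ofReal (p - 1) * (b ^ (1 / p) * b ^ (1 / p))) := by
    rw [← e]
    refine h.trans (le_of_eq ?_)
    ring
  rw [ENNReal.mul_le_mul_iff_right hc0 hct] at h1
  have h2 : ENNReal.ofReal (p - 1) =
      ENNReal.ofReal (Real.sqrt (p - 1)) * ENNReal.ofReal (Real.sqrt (p - 1)) := by
    rw [← ENNReal.ofReal_mul (Real.sqrt_nonneg _), Real.mul_self_sqrt (by linarith)]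
  have h3 : a ^ (1 / p) * a ^ (1 / p) ≤
      (ENNReal.ofReal (Real.sqrt (p - 1)) * b ^ (1 / p)) *
      (ENNReal.ofReal (Real.sqrt (p - 1)) * b ^ (1 / p)) := by
    refine h1.trans (le_of_eq ?_)
    rw [h2]; ring
  by_contra hcon
  push Not at hcon
  exact absurd h3 (not_le.2 (ENNReal.mul_lt_mul hcon hcon))

/-- `L^p`-Poincaré inequality for the standard Gaussian measure: for `p ∈ [2, ∞)` and
Schwartz `f` with `∫ f dγ = 0`, `‖f‖_{L^p(γ)} ≤ √(p-1) ‖∇f‖_{L^p(γ)}`. -/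
theorem gaussian_Lp_poincare (d : ℕ) (p : ℝ) (hp : 2 ≤ p)
    (f : SchwartzMap (EuclideanSpace ℝ (Fin d)) ℝ)
    (hf0 : ∫ x, f x ∂(stdGaussian d) = 0) :
    eLpNorm (fun x => f x) (ENNReal.ofReal p) (stdGaussian d) ≤
      ENNReal.ofReal (Real.sqrt (p - 1)) *
        eLpNorm (fun x => ‖gradient (fun y => f y) x‖) (ENNReal.ofReal p) (stdGaussian d) := by
  have hp0 : 0 < p := by linarith
  have hf : ContDiff ℝ 1 (fun x => f x) := f.smooth 1
  have cfd : Continuous (fun x => fderiv ℝ (fun y => f y) x) := hf.continuous_fderiv (by norm_num)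
  have cf := hf.continuous
  obtain ⟨M, hM⟩ : ∃ M, ∀ x, |f x| ≤ M :=
    ⟨_, fun x => SchwartzMap.norm_le_seminorm ℝ f x⟩
  obtain ⟨C, hC⟩ : ∃ C, ∀ x, ‖fderiv ℝ (fun y => f y) x‖ ≤ C := by
    obtain ⟨C, hC⟩ := f.decay' 0 1
    refine ⟨C, fun x => ?_⟩
    have := hC x
    rwa [pow_zero, one_mul, norm_iteratedFDeriv_one] at this
  have hM0 : 0 ≤ M := (abs_nonneg _).trans (hM 0)
  have hC0 : 0 ≤ C := (norm_nonneg _).trans (hC 0)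
  rw [eLpNorm_eq_lintegral_rpow_enorm_toReal (by simpa using hp0) ENNReal.ofReal_ne_top,
    eLpNorm_eq_lintegral_rpow_enorm_toReal (by simpa using hp0) ENNReal.ofReal_ne_top,
    ENNReal.toReal_ofReal hp0.le]
  have hgrad : ∀ x, ‖‖gradient (fun y => f y) x‖‖ₑ = ‖fderiv ℝ (fun y => f y) x‖ₑ := by
    intro x
    rw [enorm_norm, gradient, LinearIsometryEquiv.enorm_map]
  simp only [hgrad]
  have ia : Integrable (fun x => |f x| ^ p) (stdGaussian d) := by
    refine Integrable.of_bound (C := M ^ p) (Continuous.aestronglyMeasurable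
      (cf.abs.rpow_const fun _ => Or.inr hp0.le)) (Filter.Eventually.of_forall fun x => ?_)
    rw [Real.norm_of_nonneg (by positivity)]
    exact Real.rpow_le_rpow (abs_nonneg _) (hM x) hp0.le
  have ea : ∫⁻ x, ‖f x‖ₑ ^ p ∂(stdGaussian d) = ENNReal.ofReal (∫ x, |f x| ^ p ∂(stdGaussian d)) := by
    rw [ofReal_integral_eq_lintegral_ofReal ia (Filter.Eventually.of_forall fun x => by positivity)]
    refine lintegral_congr fun x => ?_
    rw [← ENNReal.ofReal_rpow_of_nonneg (abs_nonneg _) hp0.le, Real.enorm_eq_ofReal_abs]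
  have hbt : ∫⁻ x, ‖fderiv ℝ (fun y => f y) x‖ₑ ^ p ∂(stdGaussian d) ≠ ⊤ := by
    refine ne_top_of_le_ne_top (b := ∫⁻ x, ENNReal.ofReal (C ^ p) ∂(stdGaussian d)) (by simp)
      (lintegral_mono fun x => ?_)
    rw [← ENNReal.ofReal_rpow_of_nonneg hC0 hp0.le, ← ofReal_norm]
    exact ENNReal.rpow_le_rpow (ENNReal.ofReal_le_ofReal (hC x)) hp0.le
  have hat : ∫⁻ x, ‖f x‖ₑ ^ p ∂(stdGaussian d) ≠ ⊤ := by rw [ea]; exact ENNReal.ofReal_ne_top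
  refine gpl_enn p hp _ _ hat ?_
  set a := ∫⁻ x, ‖f x‖ₑ ^ p ∂(stdGaussian d) with ha
  set b := ∫⁻ x, ‖fderiv ℝ (fun y => f y) x‖ₑ ^ p ∂(stdGaussian d) with hb
  have hKt : ENNReal.ofReal (p - 1) * (a ^ ((p - 2) / p) * (b ^ (1 / p) * b ^ (1 / p))) ≠ ⊤ := by
    have h1 := ENNReal.rpow_ne_top_of_nonneg (div_nonneg (by linarith : 0 ≤ p - 2) hp0.le) hat
    have h2 := ENNReal.rpow_ne_top_of_nonneg (by positivity : 0 ≤ 1 / p) hbt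
    exact ENNReal.mul_ne_top ENNReal.ofReal_ne_top
      (ENNReal.mul_ne_top h1 (ENNReal.mul_ne_top h2 h2))
  have hfd : ∀ x, fderiv ℝ (fun x => |f x| ^ (p - 2) * f x) x =
      ((p - 1) * |f x| ^ (p - 2)) • fderiv ℝ (fun y => f y) x := by
    intro x
    exact ((gpl_phi_deriv p hp (f x)).comp_hasFDerivAt x
      (hf.differentiable (by norm_num) x).hasFDerivAt).fderiv
  have hpow : ∀ x, |f x| ^ (p - 2) ≤ M ^ (p - 2) := fun x =>
    Real.rpow_le_rpow (abs_nonneg _) (hM x) (by linarith)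
  have key := gpl_cov d (fun x => |f x| ^ (p - 2) * f x) (fun x => f x)
    ((gpl_phi_contDiff p hp).comp hf) hf (M ^ (p - 2) * M) M ((p - 1) * M ^ (p - 2) * C) C
    (ENNReal.ofReal (p - 1) * (a ^ ((p - 2) / p) * (b ^ (1 / p) * b ^ (1 / p)))).toReal
    (fun x => by
      rw [abs_mul, abs_of_nonneg (by positivity : 0 ≤ |f x| ^ (p - 2))]
      exact mul_le_mul (hpow x) (hM x) (abs_nonneg _) (by positivity))
    hM
    (fun x => by
      rw [hfd, norm_smul, norm_mul, Real.norm_of_nonneg (by linarith : 0 ≤ p - 1),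
        Real.norm_of_nonneg (by positivity : 0 ≤ |f x| ^ (p - 2))]
      exact mul_le_mul (mul_le_mul_of_nonneg_left (hpow x) (by linarith)) (hC x) (norm_nonneg _)
        (mul_nonneg (by linarith) (by positivity)))
    hC
    (fun θ => by
      refine ENNReal.ofReal_le_iff_le_toReal hKt |>.1 ?_
      refine (ENNReal.ofReal_le_ofReal (le_abs_self _)).trans ?_
      rw [← Real.enorm_eq_ofReal_abs]
      refine (enorm_integral_le_lintegral_enorm _).trans ?_
      have hm := gpl_holder d p hp (fun x => f x) hf θ
      refine le_trans (le_of_eq ?_) (mul_le_mul_right hm (ENNReal.ofReal (p - 1)))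
      rw [← lintegral_const_mul']
      · refine lintegral_congr fun z => ?_
        rw [hfd, enorm_mul, enorm_norm, enorm_norm, enorm_smul, enorm_mul,
          Real.enorm_of_nonneg (by linarith : 0 ≤ p - 1),
          Real.enorm_of_nonneg (by positivity : 0 ≤ |f z.1| ^ (p - 2)),
          ← ENNReal.ofReal_rpow_of_nonneg (abs_nonneg _) (by linarith), 
          Real.enorm_eq_ofReal_abs (f z.1)]
        ring
      · exact ENNReal.ofReal_ne_top)
    hf0
  have e5 : ∀ x, |f x| ^ (p - 2) * f x * f x = |f x| ^ p := by
    intro x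
    rw [mul_assoc, ← abs_mul_abs_self (f x), ← pow_two, ← Real.rpow_natCast,
      ← Real.rpow_add_of_nonneg (abs_nonneg _) (by linarith) (by norm_num)]
    congr 1
    push_cast; ring
  simp only [e5] at key
  exact ea.le.trans ((ENNReal.ofReal_le_iff_le_toReal hKt).2 key)
end

section
/- Let μ, ν be probability measures on ℝ^d with finite first moments. Then W₁(μ,ν) = sup { |∫h dμ - ∫h dν| : h ∈ C_c^∞(ℝ^d), ‖h‖_Lip ≤ 1 }, i.e. the Kantorovich–Rubinstein supremum can be restricted to smooth compactly supported 1-Lipschitz functions. -/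
open MeasureTheory Real Set

open scoped Convolution Topology

/-- Cut-off: a 1-Lipschitz function vanishing at 0 clamped by a tent. -/
noncomputable def cutTent {E : Type*} [NormedAddCommGroup E] (h : E → ℝ) (R : ℝ) (x : E) : ℝ :=
  max (-(max (R - ‖x‖) 0)) (min (h x) (max (R - ‖x‖) 0))

lemma cutTent_lip {E : Type*} [NormedAddCommGroup E] {h : E → ℝ} (hh : LipschitzWith 1 h) (R : ℝ) :
    LipschitzWith 1 (cutTent h R) := by
  have h0 : LipschitzWith 1 (fun x : E => R - ‖x‖) := by
    refine LipschitzWith.of_dist_le_mul fun x y => ?_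
    rw [Real.dist_eq, dist_eq_norm]
    have := abs_norm_sub_norm_le x y
    have e : (R - ‖x‖) - (R - ‖y‖) = -(‖x‖ - ‖y‖) := by ring
    rw [e, abs_neg]
    simpa using this
  have hb : LipschitzWith 1 (fun x : E => max (R - ‖x‖) 0) := h0.max_const 0
  have h1 := (hh.min hb)
  have h2 := hb.neg.max h1
  simp only [max_self] at h2
  exact h2

lemma cutTent_abs {E : Type*} [NormedAddCommGroup E] (h : E → ℝ) (R : ℝ) (x : E) :
    |cutTent h R x| ≤ |h x| := by
  unfold cutTent
  have hb : 0 ≤ max (R - ‖x‖) 0 := le_max_right _ _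
  generalize max (R - ‖x‖) 0 = b at *
  rw [abs_le]
  constructor
  · exact (le_min (neg_abs_le _) ((neg_nonpos.2 (abs_nonneg _)).trans hb)).trans (le_max_right _ _)
  · exact max_le ((neg_nonpos.2 hb).trans (abs_nonneg _)) ((min_le_left _ _).trans (le_abs_self _))

lemma cutTent_eq {E : Type*} [NormedAddCommGroup E] (h : E → ℝ) (R : ℝ) (x : E)
    (hx : |h x| ≤ R - ‖x‖) : cutTent h R x = h x := by
  unfold cutTent
  have hb : |h x| ≤ max (R - ‖x‖) 0 := hx.trans (le_max_left _ _)
  rw [abs_le] at hb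
  rw [min_eq_left hb.2, max_eq_right hb.1]

lemma cutTent_supp {E : Type*} [NormedAddCommGroup E] [ProperSpace E] (h : E → ℝ) (R : ℝ) :
    HasCompactSupport (cutTent h R) := by
  refine HasCompactSupport.intro (isCompact_closedBall (0 : E) R) fun x hx => ?_
  have : R - ‖x‖ ≤ 0 := by
    simp only [Metric.mem_closedBall, dist_zero_right, not_le] at hx
    linarith
  unfold cutTent
  rw [max_eq_right this]
  simp

lemma exists_mollify {d : ℕ} {g : EuclideanSpace ℝ (Fin d) → ℝ} (hg : LipschitzWith 1 g)
    (hc : HasCompactSupport g) {ε : ℝ} (hε : 0 < ε) :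
    ∃ k : EuclideanSpace ℝ (Fin d) → ℝ, ContDiff ℝ (⊤ : ℕ∞) k ∧ HasCompactSupport k ∧
      LipschitzWith 1 k ∧ ∀ x, |k x - g x| ≤ ε := by
  let φ : ContDiffBump (0 : EuclideanSpace ℝ (Fin d)) := ⟨ε / 2, ε, by positivity, by linarith⟩
  have hφs : HasCompactSupport (φ.normed volume) := φ.hasCompactSupport_normed
  have hφc : Continuous (φ.normed volume) := φ.continuous_normed
  have hex : ConvolutionExists (φ.normed volume) g (ContinuousLinearMap.lsmul ℝ ℝ) volume :=
    hφs.convolutionExists_left _ hφc hg.continuous.locallyIntegrable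
  refine ⟨φ.normed volume ⋆[ContinuousLinearMap.lsmul ℝ ℝ, volume] g, ?_, ?_, ?_, ?_⟩
  · exact hφs.contDiff_convolution_left _ φ.contDiff_normed hg.continuous.locallyIntegrable
  · exact hφs.convolution _ hc
  · refine LipschitzWith.of_dist_le_mul fun x y => ?_
    rw [Real.dist_eq, convolution_def, convolution_def, ← integral_sub (hex x) (hex y),
      ← Real.norm_eq_abs]
    have hi : Integrable (fun t => φ.normed volume t * dist x y) volume :=
      (φ.integrable_normed).mul_const _
    refine (norm_integral_le_of_norm_le hi (Filter.Eventually.of_forall fun t => ?_)).trans ?_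
    · have h1 := hg.dist_le_mul (x - t) (y - t)
      rw [dist_sub_right, Real.dist_eq] at h1
      simp only [ContinuousLinearMap.lsmul_apply, smul_eq_mul]
      rw [← mul_sub, norm_mul, Real.norm_of_nonneg (φ.nonneg_normed t)]
      exact mul_le_mul_of_nonneg_left (by simpa using h1) (φ.nonneg_normed t)
    · rw [integral_mul_const, φ.integral_normed]
      simp
  · intro x
    rw [← Real.dist_eq]
    refine φ.dist_normed_convolution_le hg.continuous.aestronglyMeasurable fun y hy => ?_
    have h1 := hg.dist_le_mul y x
    have h2 : dist y x < ε := hy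
    simp at h1
    linarith

lemma exists_seq {d : ℕ} {h : EuclideanSpace ℝ (Fin d) → ℝ} (hh : LipschitzWith 1 h)
    (h0 : h 0 = 0) :
    ∃ k : ℕ → EuclideanSpace ℝ (Fin d) → ℝ, (∀ n, ContDiff ℝ (⊤ : ℕ∞) (k n)) ∧
      (∀ n, HasCompactSupport (k n)) ∧ (∀ n, LipschitzWith 1 (k n)) ∧
      (∀ n x, ‖k n x‖ ≤ ‖x‖ + 1) ∧
      ∀ x, Filter.Tendsto (fun n => k n x) Filter.atTop (𝓝 (h x)) := by
  have key := fun n : ℕ => exists_mollify (cutTent_lip hh n) (cutTent_supp h n)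
    (Nat.one_div_pos_of_nat (α := ℝ) (n := n))
  choose k k1 k2 k3 k4 using key
  refine ⟨k, k1, k2, k3, fun n x => ?_, fun x => ?_⟩
  · have a := k4 n x
    have b := cutTent_abs h n x
    have c := hh.dist_le_mul x 0
    rw [h0] at c
    simp at c
    have e : (1 : ℝ) / (n + 1) ≤ 1 := by
      rw [div_le_one (by positivity)]
      have : (0 : ℝ) ≤ n := n.cast_nonneg
      linarith
    rw [Real.norm_eq_abs]
    have f := abs_sub_abs_le_abs_sub (k n x) (cutTent h n x)
    linarith
  · rw [tendsto_iff_dist_tendsto_zero]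
    refine squeeze_zero' (Filter.Eventually.of_forall fun n => dist_nonneg) ?_
      (tendsto_one_div_add_atTop_nhds_zero_nat (𝕜 := ℝ))
    filter_upwards [Filter.eventually_ge_atTop ⌈|h x| + ‖x‖⌉₊] with n hn
    have hn' : |h x| + ‖x‖ ≤ n := Nat.ceil_le.1 hn
    have := k4 n x
    rwa [cutTent_eq h n x (by linarith)] at this

lemma lip_integrable {d : ℕ} {μ : Measure (EuclideanSpace ℝ (Fin d))} [IsProbabilityMeasure μ]
    (hμ : Integrable (fun x : EuclideanSpace ℝ (Fin d) => ‖x‖) μ)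
    {h : EuclideanSpace ℝ (Fin d) → ℝ} (hh : LipschitzWith 1 h) : Integrable h μ := by
  refine (hμ.add (integrable_const |h 0|)).mono' hh.continuous.aestronglyMeasurable
    (Filter.Eventually.of_forall fun x => ?_)
  have c := hh.dist_le_mul x 0
  simp [Real.dist_eq] at c
  have f := abs_sub_abs_le_abs_sub (h x) (h 0)
  simp only [Pi.add_apply, Real.norm_eq_abs]
  linarith

lemma shift_integral {d : ℕ} {μ ν : Measure (EuclideanSpace ℝ (Fin d))}
    [IsProbabilityMeasure μ] [IsProbabilityMeasure ν]
    (hμ : Integrable (fun x : EuclideanSpace ℝ (Fin d) => ‖x‖) μ)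
    (hν : Integrable (fun x : EuclideanSpace ℝ (Fin d) => ‖x‖) ν)
    {h : EuclideanSpace ℝ (Fin d) → ℝ} (hh : LipschitzWith 1 h) :
    (∫ x, h x ∂μ) - ∫ x, h x ∂ν = (∫ x, (h x - h 0) ∂μ) - ∫ x, (h x - h 0) ∂ν := by
  rw [integral_sub (lip_integrable hμ hh) (integrable_const _),
    integral_sub (lip_integrable hν hh) (integrable_const _)]
  simp

/-- Kantorovich–Rubinstein duality with smooth test functions: for probability measures
`μ, ν` on `ℝ^d` with finite first moments, the `1`-Wasserstein distance
`W₁(μ,ν) = sup {|∫h dμ - ∫h dν| : h 1-Lipschitz}` coincides with the supremum restricted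
to smooth compactly supported 1-Lipschitz functions. -/
theorem wasserstein_smooth_compact_duality (d : ℕ)
    (μ ν : Measure (EuclideanSpace ℝ (Fin d)))
    [IsProbabilityMeasure μ] [IsProbabilityMeasure ν]
    (hμ : Integrable (fun x : EuclideanSpace ℝ (Fin d) => ‖x‖) μ)
    (hν : Integrable (fun x : EuclideanSpace ℝ (Fin d) => ‖x‖) ν) :
    sSup {r : ℝ | ∃ h : EuclideanSpace ℝ (Fin d) → ℝ, LipschitzWith 1 h ∧
        r = |(∫ x, h x ∂μ) - ∫ x, h x ∂ν|} =
      sSup {r : ℝ | ∃ h : EuclideanSpace ℝ (Fin d) → ℝ, ContDiff ℝ (⊤ : ℕ∞) h ∧ HasCompactSupport h ∧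
        LipschitzWith 1 h ∧ r = |(∫ x, h x ∂μ) - ∫ x, h x ∂ν|} := by
  set S := {r : ℝ | ∃ h : EuclideanSpace ℝ (Fin d) → ℝ, LipschitzWith 1 h ∧
        r = |(∫ x, h x ∂μ) - ∫ x, h x ∂ν|} with hS
  set T := {r : ℝ | ∃ h : EuclideanSpace ℝ (Fin d) → ℝ, ContDiff ℝ (⊤ : ℕ∞) h ∧
        HasCompactSupport h ∧ LipschitzWith 1 h ∧ r = |(∫ x, h x ∂μ) - ∫ x, h x ∂ν|} with hT
  have hTS : T ⊆ S := by
    rintro r ⟨h, -, -, h1, h2⟩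
    exact ⟨h, h1, h2⟩
  have hTn : T.Nonempty :=
    ⟨_, fun _ => 0, contDiff_const, HasCompactSupport.zero, LipschitzWith.const' 0, rfl⟩
  have hSb : BddAbove S := by
    refine ⟨(∫ x, ‖x‖ ∂μ) + ∫ x, ‖x‖ ∂ν, ?_⟩
    rintro r ⟨h, hh, rfl⟩
    rw [shift_integral hμ hν hh]
    have hb : ∀ x, ‖h x - h 0‖ ≤ ‖x‖ := fun x => by
      simpa [Real.dist_eq] using hh.dist_le_mul x 0
    have a := norm_integral_le_of_norm_le hμ (Filter.Eventually.of_forall hb)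
    have b := norm_integral_le_of_norm_le hν (Filter.Eventually.of_forall hb)
    exact (norm_sub_le _ _).trans (add_le_add a b)
  refine le_antisymm (csSup_le (hTn.mono hTS) ?_) (csSup_le_csSup hSb hTn hTS)
  rintro r ⟨h, hh, rfl⟩
  rw [shift_integral hμ hν hh]
  have hh' : LipschitzWith 1 (fun x => h x - h 0) :=
    LipschitzWith.of_dist_le_mul fun x y => by
      rw [dist_sub_right]
      exact hh.dist_le_mul x y
  obtain ⟨k, k1, k2, k3, k4, k5⟩ := exists_seq hh' (sub_self _)
  have lim : ∀ (ρ : Measure (EuclideanSpace ℝ (Fin d))) [IsProbabilityMeasure ρ],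
      Integrable (fun x : EuclideanSpace ℝ (Fin d) => ‖x‖) ρ →
      Filter.Tendsto (fun n => ∫ x, k n x ∂ρ) Filter.atTop (𝓝 (∫ x, (h x - h 0) ∂ρ)) := by
    intro ρ _ hρ
    exact tendsto_integral_of_dominated_convergence (fun x => ‖x‖ + 1)
      (fun n => (k3 n).continuous.aestronglyMeasurable) (hρ.add (integrable_const 1))
      (fun n => Filter.Eventually.of_forall (k4 n)) (Filter.Eventually.of_forall k5)
  refine le_of_tendsto ((lim μ hμ).sub (lim ν hν)).abs (Filter.Eventually.of_forall fun n => ?_)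
  exact le_csSup (hSb.mono hTS) ⟨k n, k1 n, k2 n, k3 n, rfl⟩
end
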